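/- arXiv:1108.4501 — 3 statements merged into one kernel-verified Lean document; each statement's English description precedes it below -/
import Mathlib

section
/- Let F be a 3-CNF formula with clauses c_1,…,c_m over variables x_1,…,x_n, let t ≥ 4, and let y_1,…,y_t be Boolean variables disjoint from x_1,…,x_n. Let C_1 be the complete set of clauses on y_1,…,y_t with the all-negative clause (ȳ_1 ∨ … ∨ ȳ_t) removed, and let C_2 = {c_i ∨ ȳ_4 ∨ … ∨ ȳ_t : i ∈ [m]}. Then every truth assignment that satisfies all clauses of C_1 ∪ C_2 sets y_1,…,y_t all to true, and its restriction to x_1,…,x_n satisfies every clause of F. In particular, if C_1 ∪ C_2 is satisfiable then F is satisfiable. -/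
-- The only clause of the complete set that `b` falsifies is the one whose literals are all
-- opposite to `b`, so that clause must be the missing one.
theorem eq_not_of_forall_ne_exists_eq {Y : Type*} {b q : Y → Bool}
    (h : ∀ p : Y → Bool, p ≠ q → ∃ y, b y = p y) : b = fun y => !q y := by
  have hq : (fun y => !b y) = q := by
    by_contra hne
    obtain ⟨y, hy⟩ := h _ hne
    exact (Bool.eq_not_self (b y)).mp hy
  funext y
  rw [← hq, Bool.not_not]

theorem satisfying_C1_C2_forces_F_general {X Y J : Type*}
    (F : J → Set X × (X → Bool)) (P : J → Set Y) (a : X ⊕ Y → Bool)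
    (hC1 : ∀ p : Y → Bool, p ≠ (fun _ => false) → ∃ y, a (Sum.inr y) = p y)
    (hC2 : ∀ j, (∃ x ∈ (F j).1, a (Sum.inl x) = (F j).2 x) ∨
      ∃ y ∈ P j, a (Sum.inr y) = false) :
    (∀ y, a (Sum.inr y) = true) ∧
    (∀ j, ∃ x ∈ (F j).1, a (Sum.inl x) = (F j).2 x) ∧
    (∃ v : X → Bool, ∀ j, ∃ x ∈ (F j).1, v x = (F j).2 x) := by
  have y_true : ∀ y, a (Sum.inr y) = true := congrFun (eq_not_of_forall_ne_exists_eq hC1)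
  have F_satisfied : ∀ j, ∃ x ∈ (F j).1, a (Sum.inl x) = (F j).2 x := fun j =>
    (hC2 j).resolve_right fun ⟨y, _, y_false⟩ =>
      Bool.false_ne_true (y_false.symm.trans (y_true y))
  exact ⟨y_true, F_satisfied, fun x => a (Sum.inl x), F_satisfied⟩

/-- Let `F` be a 3-CNF formula with clauses `c_1, …, c_m` over variables `x_1, …, x_n`
(encoded as `F : Fin m → Finset (Fin n) × (Fin n → Bool)`: clause `c_j` has nonempty
variable-index set `(F j).1` of size at most 3 and polarities `(F j).2`, `true` = positive
literal), let `t ≥ 4`, and let `y_1, …, y_t` be fresh Boolean variables, so truth assignments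
for `C₁ ∪ C₂` are functions `a : Fin n ⊕ Fin t → Bool`.
* `C₁` is the complete set of clauses on `y_1, …, y_t` minus the all-negative clause:
  clauses are indexed by polarities `p : Fin t → Bool`, `p ≠ const false`, and `a`
  satisfies clause `p` iff `∃ i : Fin t, a (inr i) = p i`.
* `C₂ = {c_j ∨ ȳ_4 ∨ … ∨ ȳ_t : j ∈ [m]}`: `a` satisfies the `j`-th clause iff it satisfies
  `c_j` on the `x`-variables or makes some `y_i` with `4 ≤ i ≤ t` false (indices of `Fin t`
  are 0-based, so `y_4, …, y_t` correspond to `3 ≤ (i : ℕ)`).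
Every assignment `a` satisfying all clauses of `C₁ ∪ C₂` sets all of `y_1, …, y_t` to true
and its restriction to the `x`-variables satisfies every clause of `F`; in particular, if
`C₁ ∪ C₂` is satisfiable then `F` is satisfiable. -/
theorem satisfying_C1_C2_forces_F (n m t : ℕ) (ht : 4 ≤ t)
    (F : Fin m → Finset (Fin n) × (Fin n → Bool))
    (hF3 : ∀ j, (F j).1.card ≤ 3) (hFne : ∀ j, (F j).1.Nonempty)
    (a : Fin n ⊕ Fin t → Bool)
    (hC1 : ∀ p : Fin t → Bool, p ≠ (fun _ => false) →
        ∃ i : Fin t, a (Sum.inr i) = p i)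
    (hC2 : ∀ j : Fin m,
        (∃ i ∈ (F j).1, a (Sum.inl i) = (F j).2 i) ∨
        (∃ i : Fin t, 3 ≤ (i : ℕ) ∧ a (Sum.inr i) = false)) :
    (∀ i : Fin t, a (Sum.inr i) = true) ∧
    (∀ j : Fin m, ∃ i ∈ (F j).1, (fun i' => a (Sum.inl i')) i = (F j).2 i) ∧
    (∃ x : Fin n → Bool, ∀ j : Fin m, ∃ i ∈ (F j).1, x i = (F j).2 i) := by
  exact satisfying_C1_C2_forces_F_general (fun j => (↑(F j).1, (F j).2))
    (fun _ => {i : Fin t | 3 ≤ (i : ℕ)}) a hC1 hC2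
end

section
/- Let k ≥ 0 and r ≥ 1 be integers and let S be a system of m equations ∏_{i∈I_j} x_i = b_j (j ∈ [m]) over variables x_1,…,x_n ∈ {−1,1}, with b_j ∈ {−1,1}, positive integer weights w_j, the index sets I_j nonempty, pairwise distinct, and of size |I_j| ≤ r, and such that the characteristic vectors of I_1,…,I_m span F_2^n (equivalently, the m×n matrix A over F_2 with a_{ji} = 1 iff i ∈ I_j has rank n). If n ≥ (2k − 1)r + 1, then there exists x ∈ {−1,1}^n whose total satisfied weight is at least W/2 + k, where W = Σ_j w_j; i.e., the maximum excess of S is at least k. -/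
/-!
Identify the left-hand side of an equation with the character `x ↦ ∏ i ∈ I, x i` of the group
`{±1}ⁿ`. The spanning condition makes the character of `[n]` a product of characters of the system;
choose a *shortest* such product, over a set `K` of equations. Every variable occurs in one of the
equations of `K`, so `n ≤ r |K|` and hence `2k ≤ |K|`. Because `K` is shortest, its characters are
independent, and no equation outside `K` has a left-hand side that is a product of those in `K`.
Hence the equations in `K` have a common solution, and the Riesz product
`∏ j ∈ K, (1 + b j * χ j)`, which is `2 ^ |K|` times the indicator function of the common solutions,
is orthogonal to every character of the system outside `K`. On average over the common solutions the
equations outside `K` thus contribute nothing to the excess, while those in `K` contribute half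
their weight, which is at least `|K| / 2`.
-/

open Finset

section Shortest

variable {κ Γ : Type*} [CommMonoid Γ] {v : κ → Γ} {u : Γ} {K S T : Finset κ} {j : κ}

theorem prod_symmDiff_of_mul_self [DecidableEq κ] (hΓ : ∀ g : Γ, g * g = 1) (v : κ → Γ)
    (S T : Finset κ) : ∏ j ∈ symmDiff S T, v j = (∏ j ∈ S, v j) * ∏ j ∈ T, v j := by
  have hdisj : Disjoint (S \ T) (T \ S) := disjoint_sdiff_sdiff
  calc ∏ j ∈ symmDiff S T, v j
      = (∏ j ∈ S \ T, v j) * ∏ j ∈ T \ S, v j := prod_union hdisj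
    _ = ((∏ j ∈ S ∩ T, v j) * ∏ j ∈ S \ T, v j) * ((∏ j ∈ T ∩ S, v j) * ∏ j ∈ T \ S, v j) := by
        rw [mul_mul_mul_comm, inter_comm T S, hΓ, one_mul]
    _ = (∏ j ∈ S, v j) * ∏ j ∈ T, v j := by
        rw [prod_inter_mul_prod_sdiff, prod_inter_mul_prod_sdiff]

-- Otherwise replacing `T` by `S` inside `K` would give a shorter product.
theorem card_le_card_of_minimalFor_prod (hΓ : ∀ g : Γ, g * g = 1)
    (hK : MinimalFor (fun L : Finset κ ↦ ∏ j ∈ L, v j = u) card K) (hT : T ⊆ K)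
    (hTS : ∏ j ∈ T, v j = ∏ j ∈ S, v j) : #T ≤ #S := by
  classical
  have hprod : ∏ j ∈ symmDiff (K \ T) S, v j = u := by
    rw [prod_symmDiff_of_mul_self hΓ, ← hTS, prod_sdiff hT, hK.1]
  have hmin : #K ≤ #(symmDiff (K \ T) S) := hK.le hprod
  have hcard : #(symmDiff (K \ T) S) ≤ #(K \ T) + #S :=
    (card_le_card symmDiff_le_sup).trans (card_union_le _ _)
  have hsdiff := card_sdiff_add_card_eq_card hT
  lia

theorem eq_empty_of_minimalFor_prod (hΓ : ∀ g : Γ, g * g = 1)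
    (hK : MinimalFor (fun L : Finset κ ↦ ∏ j ∈ L, v j = u) card K) (hT : T ⊆ K)
    (h : ∏ j ∈ T, v j = 1) : T = ∅ :=
  card_eq_zero.1 <| Nat.le_zero.1 <|
    card_le_card_of_minimalFor_prod (S := ∅) hΓ hK hT (h.trans prod_empty.symm)

theorem mem_of_minimalFor_prod (hΓ : ∀ g : Γ, g * g = 1) (hinj : Function.Injective v)
    (hK : MinimalFor (fun L : Finset κ ↦ ∏ j ∈ L, v j = u) card K) (hT : T ⊆ K)
    (hj : v j ≠ 1) (h : ∏ i ∈ T, v i = v j) : j ∈ K := by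
  have hcard : #T ≤ 1 :=
    card_le_card_of_minimalFor_prod (S := {j}) hΓ hK hT (h.trans (prod_singleton v j).symm)
  obtain rfl | ⟨i, rfl⟩ : T = ∅ ∨ ∃ i, T = {i} := by
    rwa [← card_eq_zero, ← card_eq_one, ← Nat.le_one_iff_eq_zero_or_eq_one]
  · exact absurd (h.symm.trans prod_empty) hj
  · rw [prod_singleton] at h
    exact hinj h ▸ singleton_subset_iff.1 hT

end Shortest

theorem signChar_mul_self {M : Type*} [MulOneClass M] (ψ : M →* ℤˣ) : ψ * ψ = 1 :=
  MonoidHom.ext fun g ↦ Int.units_mul_self (ψ g)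

section SolutionSet

variable {G κ : Type*} [Group G] [Fintype G]

theorem sum_signChar_eq_zero {ψ : G →* ℤˣ} (hψ : ψ ≠ 1) : ∑ g, (ψ g : ℤ) = 0 :=
  sum_hom_units_eq_zero ((Units.coeHom ℤ).comp ψ) fun h ↦
    hψ <| MonoidHom.ext fun g ↦ Units.ext (DFunLike.congr_fun h g)

/-- The common solutions `g ∈ G` of the equations `χ j g = b j` for `j ∈ K`. -/
def solutionSet (χ : κ → G →* ℤˣ) (b : κ → ℤˣ) (K : Finset κ) : Finset G :=
  {g | ∀ j ∈ K, χ j g = b j}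

variable {χ : κ → G →* ℤˣ} {K : Finset κ}

theorem mem_solutionSet {b : κ → ℤˣ} {g : G} :
    g ∈ solutionSet χ b K ↔ ∀ j ∈ K, χ j g = b j := by
  simp [solutionSet]

theorem prod_one_add_eq_ite_mem_solutionSet [DecidableEq G] (b : κ → ℤˣ) (g : G) :
    ∏ j ∈ K, (1 + ((b j * χ j g : ℤˣ) : ℤ)) = if g ∈ solutionSet χ b K then 2 ^ #K else 0 := by
  have hfactor (s t : ℤˣ) : 1 + ((s * t : ℤˣ) : ℤ) = if t = s then 2 else 0 := by
    revert s t; decide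
  simp only [hfactor, prod_ite_zero, prod_const, mem_solutionSet]

theorem two_pow_mul_sum_solutionSet (b : κ → ℤˣ) (ψ : G →* ℤˣ) :
    2 ^ #K * ∑ g ∈ solutionSet χ b K, (ψ g : ℤ) =
      ∑ T ∈ K.powerset, ((∏ j ∈ T, b j : ℤˣ) : ℤ) * ∑ g, ((ψ * ∏ j ∈ T, χ j) g : ℤ) := by
  classical
  calc 2 ^ #K * ∑ g ∈ solutionSet χ b K, (ψ g : ℤ)
      = ∑ g, (ψ g : ℤ) * ∏ j ∈ K, (1 + ((b j * χ j g : ℤˣ) : ℤ)) := by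
        rw [mul_comm]
        simp only [prod_one_add_eq_ite_mem_solutionSet, mul_ite, mul_zero, sum_ite_mem, univ_inter,
          sum_mul]
    _ = ∑ g, ∑ T ∈ K.powerset,
          ((∏ j ∈ T, b j : ℤˣ) : ℤ) * ((ψ * ∏ j ∈ T, χ j) g : ℤ) := by
        refine sum_congr rfl fun g _ ↦ ?_
        rw [prod_one_add, mul_sum]
        refine sum_congr rfl fun T _ ↦ ?_
        simp only [MonoidHom.mul_apply, MonoidHom.finsetProd_apply, Units.val_mul,
          Units.coe_prod, prod_mul_distrib]
        ring
    _ = _ := by rw [sum_comm]; simp only [mul_sum]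

theorem solutionSet_nonempty (hindep : ∀ T ⊆ K, ∏ j ∈ T, χ j = 1 → T = ∅) (b : κ → ℤˣ) :
    (solutionSet χ b K).Nonempty := by
  have hcard : 2 ^ #K * (#(solutionSet χ b K) : ℤ) = Fintype.card G := by
    have h := two_pow_mul_sum_solutionSet (χ := χ) (K := K) b 1
    rw [sum_eq_single_of_mem ∅ (empty_mem_powerset K)] at h
    · simpa using h
    · intro T hT hne
      rw [one_mul, sum_signChar_eq_zero fun h1 ↦ hne (hindep T (mem_powerset.1 hT) h1), mul_zero]
  by_contra hempty
  simp [not_nonempty_iff_eq_empty.1 hempty, eq_comm] at hcard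

theorem sum_solutionSet_eq_zero {ψ : G →* ℤˣ} (hψ : ∀ T ⊆ K, ∏ j ∈ T, χ j ≠ ψ) (b : κ → ℤˣ) :
    ∑ g ∈ solutionSet χ b K, (ψ g : ℤ) = 0 := by
  have hne (T : Finset κ) (hT : T ⊆ K) : ψ * ∏ j ∈ T, χ j ≠ 1 := fun h ↦
    hψ T hT <| mul_left_cancel (h.trans (signChar_mul_self ψ).symm)
  have h : 2 ^ #K * ∑ g ∈ solutionSet χ b K, (ψ g : ℤ) = 0 := by
    rw [two_pow_mul_sum_solutionSet]
    refine sum_eq_zero fun T hT ↦ ?_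
    rw [sum_signChar_eq_zero (hne T (mem_powerset.1 hT)), mul_zero]
  exact (mul_eq_zero.1 h).resolve_left (by positivity)

end SolutionSet

theorem exists_sum_le_sum_mul_signChar {G κ R : Type*} [Group G] [Finite G] [Fintype κ]
    [Ring R] [LinearOrder R] [IsOrderedAddMonoid R] {χ : κ → G →* ℤˣ} {K : Finset κ}
    (hindep : ∀ T ⊆ K, ∏ j ∈ T, χ j = 1 → T = ∅)
    (hfree : ∀ j, ∀ T ⊆ K, ∏ i ∈ T, χ i = χ j → j ∈ K) (b : κ → ℤˣ) (w : κ → R) :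
    ∃ g, ∑ j ∈ K, w j ≤ ∑ j, w j * ((b j * χ j g : ℤˣ) : ℤ) := by
  classical
  cases nonempty_fintype G
  have hterm (j : κ) : ∑ g ∈ solutionSet χ b K, w j * (((b j * χ j g : ℤˣ) : ℤ) : R) =
      if j ∈ K then ∑ _g ∈ solutionSet χ b K, w j else 0 := by
    split_ifs with hj
    · refine sum_congr rfl fun g hg ↦ ?_
      rw [mem_solutionSet.1 hg j hj, Int.units_mul_self, Units.val_one, Int.cast_one, mul_one]
    · have hzero : ∑ g ∈ solutionSet χ b K, (χ j g : ℤ) = 0 :=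
        sum_solutionSet_eq_zero (fun T hT h ↦ hj (hfree j T hT h)) b
      simp only [Units.val_mul, Int.cast_mul, ← mul_sum, ← Int.cast_sum, hzero, Int.cast_zero,
        mul_zero]
  have hsum : ∑ _g ∈ solutionSet χ b K, ∑ j ∈ K, w j =
      ∑ g ∈ solutionSet χ b K, ∑ j, w j * (((b j * χ j g : ℤˣ) : ℤ) : R) := by
    rw [sum_comm, sum_comm (t := univ)]
    simp only [hterm, sum_ite_mem, univ_inter]
  obtain ⟨g, -, hg⟩ := exists_le_of_sum_le (solutionSet_nonempty hindep b) hsum.le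
  exact ⟨g, hg⟩

theorem exists_sum_eq_of_mem_span_zmod_two {κ V : Type*} [AddCommGroup V] [Module (ZMod 2) V]
    {v : κ → V} {u : V} (hu : u ∈ Submodule.span (ZMod 2) (Set.range v)) :
    ∃ K : Finset κ, ∑ j ∈ K, v j = u := by
  obtain ⟨c, rfl⟩ := Finsupp.mem_span_range_iff_exists_finsupp.1 hu
  refine ⟨c.support, sum_congr rfl fun j hj ↦ ?_⟩
  have hcj : c j = 1 := Fin.eq_one_of_ne_zero _ (Finsupp.mem_support_iff.1 hj)
  simp only [hcj, one_smul]

section WalshChar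

variable {ι κ : Type*}

/-- The Walsh character `x ↦ ∏ i ∈ I, x i` of the sign group `{±1}^ι`, that is, the left-hand side
of the equation with index set `I`. -/
def walshChar (I : Finset ι) : (ι → ℤˣ) →* ℤˣ :=
  ∏ i ∈ I, Pi.evalMonoidHom (fun _ ↦ ℤˣ) i

theorem walshChar_apply (I : Finset ι) (x : ι → ℤˣ) : walshChar I x = ∏ i ∈ I, x i := by
  simp [walshChar]

theorem walshChar_mulSingle [DecidableEq ι] (I : Finset ι) (i : ι) :
    walshChar I (Pi.mulSingle i (-1)) = if i ∈ I then -1 else 1 := by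
  rw [walshChar_apply, prod_pi_mulSingle']

theorem walshChar_injective : Function.Injective (walshChar (ι := ι)) := by
  classical
  intro I J h
  ext i
  have hi := DFunLike.congr_fun h (Pi.mulSingle i (-1))
  rw [walshChar_mulSingle, walshChar_mulSingle] at hi
  split_ifs at hi <;> simp_all

theorem walshChar_ne_one {I : Finset ι} (hI : I.Nonempty) : walshChar I ≠ 1 :=
  walshChar_injective.ne hI.ne_empty

theorem subset_biUnion_of_prod_walshChar_eq [DecidableEq ι] {I : κ → Finset ι} {J : Finset ι}
    {K : Finset κ} (h : ∏ j ∈ K, walshChar (I j) = walshChar J) : J ⊆ K.biUnion I := by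
  intro i hi
  have hprod : ∏ j ∈ K, walshChar (I j) (Pi.mulSingle i (-1)) ≠ 1 := by
    rw [← MonoidHom.finsetProd_apply, h, walshChar_mulSingle, if_pos hi]
    decide
  obtain ⟨j, hj, hne⟩ := exists_ne_one_of_prod_ne_one hprod
  rw [walshChar_mulSingle] at hne
  exact mem_biUnion.2 ⟨j, hj, by_contra fun hij ↦ hne (if_neg hij)⟩

theorem prod_walshChar_eq_of_sum_eq [Finite ι] [DecidableEq ι] {I : κ → Finset ι} {J : Finset ι}
    {K : Finset κ}
    (h : ∑ j ∈ K, (fun i ↦ if i ∈ I j then 1 else 0 : ι → ZMod 2) =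
      fun i ↦ if i ∈ J then 1 else 0) :
    ∏ j ∈ K, walshChar (I j) = walshChar J := by
  cases nonempty_fintype ι
  refine MonoidHom.ext fun x ↦ ?_
  let L : (ι → ZMod 2) →ₗ[ZMod 2] Additive ℤˣ :=
    Fintype.linearCombination (ZMod 2) fun i ↦ Additive.ofMul (x i)
  have hL (A : Finset ι) : L (fun i ↦ if i ∈ A then 1 else 0) = Additive.ofMul (walshChar A x) := by
    simp [L, Fintype.linearCombination_apply, walshChar_apply, ite_smul]
  have hLh := congrArg L h
  simp only [map_sum, hL, ← ofMul_prod] at hLh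
  rw [MonoidHom.finsetProd_apply]
  exact Additive.ofMul.injective hLh

theorem exists_prod_walshChar_eq [Fintype ι] [DecidableEq ι] {I : κ → Finset ι}
    (hone : (1 : ι → ZMod 2) ∈
      Submodule.span (ZMod 2) (Set.range fun j i ↦ if i ∈ I j then 1 else 0)) :
    ∃ K : Finset κ, ∏ j ∈ K, walshChar (I j) = walshChar univ := by
  obtain ⟨K, hK⟩ := exists_sum_eq_of_mem_span_zmod_two hone
  exact ⟨K, prod_walshChar_eq_of_sum_eq <| hK.trans <| by ext i; simp⟩

end WalshChar

theorem sum_satisfied_eq {κ 𝕜 : Type*} [Fintype κ] [Field 𝕜] [NeZero (2 : 𝕜)] (b s : κ → ℤˣ)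
    (w : κ → 𝕜) : ∑ j with s j = b j, w j =
      (∑ j, w j) / 2 + (∑ j, w j * ((b j * s j : ℤˣ) : ℤ)) / 2 := by
  rw [sum_filter, ← add_div, ← sum_add_distrib, sum_div]
  refine sum_congr rfl fun j _ ↦ ?_
  obtain hb | hb := Int.units_eq_one_or (b j) <;> obtain hs | hs := Int.units_eq_one_or (s j) <;>
    simp [hb, hs]

theorem reduced_system_excess_ge_general {ι κ 𝕜 : Type*} [Fintype ι] [DecidableEq ι] [Fintype κ]
    [Field 𝕜] [LinearOrder 𝕜] [IsStrictOrderedRing 𝕜] {r d : ℕ} {I : κ → Finset ι}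
    (hne : ∀ j, (I j).Nonempty) (hsize : ∀ j, #(I j) ≤ r) (hdist : Function.Injective I)
    {b : κ → ℤ} (hb : ∀ j, b j = 1 ∨ b j = -1) {w : κ → 𝕜} (hw : ∀ j, 1 ≤ w j)
    (hone : (1 : ι → ZMod 2) ∈
      Submodule.span (ZMod 2) (Set.range fun j i ↦ if i ∈ I j then 1 else 0))
    (hd : ((d : ℤ) - 1) * r < Fintype.card ι) :
    ∃ x : ι → ℤ, (∀ i, x i = 1 ∨ x i = -1) ∧
      (∑ j, w j) / 2 + d / 2 ≤ ∑ j with ∏ i ∈ I j, x i = b j, w j := by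
  lift b to κ → ℤˣ using fun j ↦ Int.isUnit_iff.2 (hb j)
  obtain ⟨K, hK⟩ := exists_minimalFor_of_wellFoundedLT _ card (exists_prod_walshChar_eq hone)
  have hcover : Fintype.card ι ≤ #K * r :=
    (card_le_card (subset_biUnion_of_prod_walshChar_eq hK.1)).trans
      (card_biUnion_le_card_mul _ _ _ fun j _ ↦ hsize j)
  have hdK : d ≤ #K := by
    have : (d : ℤ) - 1 < #K :=
      lt_of_mul_lt_mul_right (hd.trans_le (mod_cast hcover)) (Int.natCast_nonneg r)
    lia
  obtain ⟨x, hx⟩ := exists_sum_le_sum_mul_signChar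
    (fun T hT ↦ eq_empty_of_minimalFor_prod signChar_mul_self hK hT)
    (fun j T hT ↦ mem_of_minimalFor_prod signChar_mul_self (walshChar_injective.comp hdist) hK hT
      (walshChar_ne_one (hne j))) b w
  have hKw : (#K : 𝕜) ≤ ∑ j ∈ K, w j := by
    simpa using card_nsmul_le_sum K w 1 fun j _ ↦ hw j
  have hdx : (d : 𝕜) ≤ ∑ j, w j * ((b j * walshChar (I j) x : ℤˣ) : ℤ) :=
    (Nat.cast_le.2 hdK).trans (hKw.trans hx)
  refine ⟨fun i ↦ x i, fun i ↦ Int.isUnit_iff.1 (x i).isUnit, ?_⟩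
  simp only [← Units.coe_prod, Units.val_inj, ← walshChar_apply]
  rw [sum_satisfied_eq]
  gcongr

/-- Theorem (Crowston et al.).  Let `k ≥ 0` and `r ≥ 1` be integers and let `S` be a system
of `m` equations `∏_{i ∈ I_j} x_i = b_j` over `{−1,1}`-variables `x_1, …, x_n` with
`b j ∈ {−1,1}`, positive integer weights `w j`, nonempty pairwise distinct index sets
`I j` of size at most `r`, and such that the characteristic vectors of `I_1, …, I_m`
span `F₂ⁿ` (equivalently, the `m × n` matrix over `F₂` with `a_{ji} = 1` iff `i ∈ I_j`
has rank `n`, i.e. `S` is reduced under Rules 1 and 2).  If `n ≥ (2k − 1)r + 1`, then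
there exists an assignment `x ∈ {−1,1}ⁿ` whose total satisfied weight is at least
`W/2 + k`, where `W = Σ_j w_j`; i.e. the maximum excess of `S` is at least `k`. -/
theorem reduced_system_excess_ge (n m r k : ℕ) (hr : 1 ≤ r)
    (I : Fin m → Finset (Fin n)) (hne : ∀ j, (I j).Nonempty)
    (hsize : ∀ j, (I j).card ≤ r)
    (hdist : Function.Injective I)
    (b : Fin m → ℤ) (hb : ∀ j, b j = 1 ∨ b j = -1)
    (w : Fin m → ℕ) (hw : ∀ j, 0 < w j)
    (hspan : Submodule.span (ZMod 2)
        (Set.range (fun j : Fin m => fun i : Fin n => (if i ∈ I j then 1 else 0 : ZMod 2)))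
      = ⊤)
    (hn : (2 * (k : ℤ) - 1) * (r : ℤ) + 1 ≤ (n : ℤ)) :
    ∃ x : Fin n → ℤ, (∀ i, x i = 1 ∨ x i = -1) ∧
      (∑ j : Fin m, (w j : ℚ)) / 2 + (k : ℚ)
        ≤ ∑ j ∈ Finset.univ.filter (fun j : Fin m => (∏ i ∈ I j, x i) = b j), (w j : ℚ) := by
  simpa using reduced_system_excess_ge_general (d := 2 * k) hne hsize hdist hb
    (w := fun j ↦ (w j : ℚ)) (by exact_mod_cast hw) (hspan ▸ Submodule.mem_top) (by simpa using hn)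
end

section
/- Let F be a CNF formula with clauses c_1,…,c_m over variables x_1,…,x_n, where clause c_j has r_j literals over pairwise distinct variables, let r ≥ max_j r_j, and let H(x) = Σ_{j=1}^m 2^{r−r_j} [1 − ∏_{i∈var(c_j)} (1 + d_{ij} x_i)] with d_{ij} = 1 if x_i ∈ c_j and d_{ij} = −1 if x̄_i ∈ c_j (true encoded as −1, false as 1). Then for every integer k ≥ 0, there exists a truth assignment satisfying at least asat(F) + k clauses of F if and only if there exists x ∈ {−1,1}^n with H(x) ≥ k·2^r. -/
/-! A factor `1 + d_i x_i` of a clause product is `0` if its literal is true and `2` otherwise, so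
the product is `0` on a satisfied clause and `2 ^ r_j` on a falsified one. Hence the `j`-th summand
of `H` is `2 ^ r` times the amount by which the truth value (`1` or `0`) of `c_j` exceeds its mean
`1 - 2 ^ (-r_j)` under a random assignment, and summing over `j` gives
`H(x) = 2 ^ r * (#satisfied - asat F)`. -/

/-- A clause of a CNF formula: the set of its variables and, for each variable, whether it occurs
positively (`true`) or negated (`false`); polarities of variables outside the set are ignored. -/
abbrev CNFClause (V : Type*) := Finset V × (V → Bool)

namespace CNFClause

variable {V : Type*}

/-- The clause `c` is satisfied by the assignment `x`, in which `-1` stands for true and `1` for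
false. -/
abbrev Satisfies (c : CNFClause V) (x : V → ℤ) : Prop :=
  ∃ i ∈ c.1, x i = (if c.2 i then -1 else 1)

/-- The polynomial `∏ (1 + d_i x_i)` of a clause, where `d_i = 1` for a positive and `d_i = -1` for
a negated variable. -/
def literalProd (R : Type*) [CommRing R] (c : CNFClause V) (x : V → ℤ) : R :=
  ∏ i ∈ c.1, (1 + (if c.2 i then (1 : R) else -1) * (x i : R))

theorem one_add_sign_mul_eq_ite {R : Type*} [Ring R] (b : Bool) {a : ℤ} (ha : a = 1 ∨ a = -1) :
    1 + (if b then (1 : R) else -1) * (a : R) = if a ≠ (if b then -1 else 1) then 2 else 0 := by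
  rcases ha with rfl | rfl <;> cases b <;> norm_num

theorem literalProd_eq_ite {R : Type*} [CommRing R] (c : CNFClause V) {x : V → ℤ}
    [Decidable (c.Satisfies x)] (hx : ∀ i, x i = 1 ∨ x i = -1) :
    c.literalProd R x = if c.Satisfies x then 0 else 2 ^ c.1.card := by
  have hsat : (∀ i ∈ c.1, x i ≠ if c.2 i then -1 else 1) ↔ ¬ c.Satisfies x := by
    simp only [Satisfies, not_exists, not_and, ne_eq]
  simp_rw [literalProd, one_add_sign_mul_eq_ite _ (hx _), Finset.prod_ite_zero, hsat,
    Finset.prod_const, ite_not]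

theorem two_pow_sub_card_mul_one_sub_literalProd {K : Type*} [Field K] [CharZero K]
    (c : CNFClause V) {r : ℕ} (hr : c.1.card ≤ r) {x : V → ℤ} [Decidable (c.Satisfies x)]
    (hx : ∀ i, x i = 1 ∨ x i = -1) :
    (2 : K) ^ (r - c.1.card) * (1 - c.literalProd K x) =
      2 ^ r * ((if c.Satisfies x then 1 else 0) - (1 - 2 ^ (-(c.1.card : ℤ)))) := by
  rw [pow_sub₀ _ two_ne_zero hr, zpow_neg, zpow_natCast, literalProd_eq_ite c hx, mul_assoc]
  congr 1
  split_ifs <;> field_simp <;> ring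

end CNFClause

section Formula

variable {ι V : Type*} [Fintype ι]

/-- The expected number of clauses satisfied by a uniformly random assignment. -/
def asat (K : Type*) [Field K] (F : ι → CNFClause V) : K :=
  ∑ j, (1 - (2 : K) ^ (-((F j).1.card : ℤ)))

/-- The number of clauses of `F` satisfied by `x`. -/
def numSatisfied (F : ι → CNFClause V) (x : V → ℤ)
    [DecidablePred fun j => (F j).Satisfies x] : ℕ :=
  (Finset.univ.filter fun j => (F j).Satisfies x).card

/-- The polynomial `H` of the paper: the excess of satisfied clauses over the average, with
denominators cleared by the factor `2 ^ r`, for `r` at least the length of every clause. -/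
def scaledExcess (R : Type*) [CommRing R] (r : ℕ) (F : ι → CNFClause V) (x : V → ℤ) : R :=
  ∑ j, (2 : R) ^ (r - (F j).1.card) * (1 - (F j).literalProd R x)

theorem scaledExcess_eq_two_pow_mul {K : Type*} [Field K] [CharZero K] (F : ι → CNFClause V)
    {r : ℕ} (hr : ∀ j, (F j).1.card ≤ r) {x : V → ℤ} [DecidablePred fun j => (F j).Satisfies x]
    (hx : ∀ i, x i = 1 ∨ x i = -1) :
    scaledExcess K r F x = 2 ^ r * (numSatisfied F x - asat K F) := by
  simp only [scaledExcess, asat, numSatisfied, ← Finset.sum_boole, ← Finset.sum_sub_distrib,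
    Finset.mul_sum, (F _).two_pow_sub_card_mul_one_sub_literalProd (hr _) hx]

theorem asat_plus_k_iff_H_ge_general {K : Type*} [Field K] [LinearOrder K] [IsStrictOrderedRing K]
    (F : ι → CNFClause V) {r : ℕ} (hr : ∀ j, (F j).1.card ≤ r)
    {x : V → ℤ} [DecidablePred fun j => (F j).Satisfies x] (hx : ∀ i, x i = 1 ∨ x i = -1)
    (k : K) :
    asat K F + k ≤ numSatisfied F x ↔ k * 2 ^ r ≤ scaledExcess K r F x := by
  rw [scaledExcess_eq_two_pow_mul F hr hx, mul_comm k, mul_le_mul_iff_right₀ (by positivity),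
    le_sub_iff_add_le']

end Formula


/-- Let `F` be a CNF formula with clauses `c_1, …, c_m` over variables `x_1, …, x_n`,
encoded as `F : Fin m → Finset (Fin n) × (Fin n → Bool)`: clause `c_j` has nonempty
variable-index set `var(c_j) = (F j).1` with `r_j = (F j).1.card` literals, and polarities
`(F j).2` (`true` meaning `x_i ∈ c_j`, i.e. `d_{ij} = 1`; `false` meaning `x̄_i ∈ c_j`,
i.e. `d_{ij} = -1`); let `r ≥ max_j r_j`.  Truth values are encoded in `{−1,1}` with `−1`
standing for true and `1` for false, so a truth assignment is `x : Fin n → ℤ` with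
`x i ∈ {−1,1}`, and `x` satisfies `c_j` iff `∃ i ∈ (F j).1, x i = (if (F j).2 i then -1 else 1)`.
With `H(x) = Σ_j 2^{r−r_j} (1 − ∏_{i ∈ var(c_j)} (1 + d_{ij} x_i))` and
`asat(F) = Σ_j (1 − 2^{−r_j})`: for every integer `k ≥ 0`, there exists a truth assignment
satisfying at least `asat(F) + k` clauses of `F` iff there exists `x ∈ {−1,1}ⁿ` with
`H(x) ≥ k · 2^r`. -/
theorem asat_plus_k_iff_H_ge (n m r : ℕ)
    (F : Fin m → Finset (Fin n) × (Fin n → Bool))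
    (hne : ∀ j, (F j).1.Nonempty) (hr : ∀ j, (F j).1.card ≤ r) :
    ∀ k : ℕ,
      ((∃ x : Fin n → ℤ, (∀ i, x i = 1 ∨ x i = -1) ∧
          (∑ j : Fin m, (1 - (2 : ℚ) ^ (-((F j).1.card : ℤ)))) + (k : ℚ)
            ≤ ((Finset.univ.filter
                (fun j : Fin m =>
                  ∃ i ∈ (F j).1, x i = (if (F j).2 i then -1 else 1))).card : ℚ))
        ↔ (∃ x : Fin n → ℤ, (∀ i, x i = 1 ∨ x i = -1) ∧
            (k : ℚ) * 2 ^ r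
              ≤ ∑ j : Fin m, (2 : ℚ) ^ (r - (F j).1.card)
                  * (1 - ∏ i ∈ (F j).1,
                      (1 + (if (F j).2 i then (1 : ℚ) else -1) * (x i : ℚ))))) :=
  fun k => exists_congr fun _ => and_congr_right fun hx =>
    asat_plus_k_iff_H_ge_general F hr hx (k : ℚ)
end
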